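/- Each single transition of the call-by-need Storeless Abstract Machine preserves closedness and well-namedness of the plugging: if the plugging E⟨t̄⟩ is closed and well-named and (t̄, E) → (t̄', E') is a SAM transition (where in rule (5) the copy v̄^≈ uses fresh variables not occurring in the configuration), then the plugging E'⟨t̄'⟩ is closed and well-named. -/

import Mathlib

/-! Since the original plugging is closed, the second half of well-namedness is free once
closedness is preserved, so two things have to be seen for each rule: no variable becomes free, and
no binder is duplicated.

Free variables. Evaluation contexts are monotone in the free variables of the hole
(`ctx_fv_mono`), so the comparison can be made below the unchanged outer context. There, each rule
only moves subterms under more binders, except that the copy in rule (5) and the deletion of a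
substitution in rule (6) need an argument: the copy has the same free variables by α-equivalence
(`mem_fv_of_alphaEq`), and the deleted variable is not free in the remaining context. Captures
are harmless for closedness, so no freshness is needed here.

Binders. The binders of a plugging are the sum of those of the context and of the term
(`binders_plug`). Rules (1)-(4) permute them, rule (6) removes one, and rule (5) adds those of
the fresh copy, which are distinct and disjoint from the old ones. -/

namespace SAM

/-- Terms of the λ-calculus with explicit substitutions:
`t ::= x | λx.t | t t | t[x←t]` (`esub t x u` denotes `t[x←u]`). -/
inductive Term : Type
  | var : ℕ → Term
  | lam : ℕ → Term → Term
  | app : Term → Term → Term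
  | esub : Term → ℕ → Term → Term
  deriving DecidableEq

namespace Term

/-- Pure terms contain no explicit substitutions. -/
def Pure : Term → Prop
  | var _ => True
  | lam _ t => t.Pure
  | app t u => t.Pure ∧ u.Pure
  | esub _ _ _ => False

/-- Pure values are abstractions of pure terms. -/
def IsPureValue : Term → Prop
  | lam _ t => t.Pure
  | _ => False

/-- The multiset of free variables of a term. -/
def fv : Term → Multiset ℕ
  | var x => {x}
  | lam x t => t.fv.filter (· ≠ x)
  | app t u => t.fv + u.fv
  | esub t x u => t.fv.filter (· ≠ x) + u.fv

/-- The size of a term. -/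
def size : Term → ℕ
  | var _ => 1
  | lam _ t => t.size + 1
  | app t u => t.size + u.size + 1
  | esub t _ u => t.size + u.size + 1

/-- The multiset of variables bound (by λ or by an explicit substitution) in a term. -/
def binders : Term → Multiset ℕ
  | var _ => 0
  | lam x t => x ::ₘ t.binders
  | app t u => t.binders + u.binders
  | esub t x u => x ::ₘ (t.binders + u.binders)

/-- The multiset of all variables occurring (free, bound or binding) in a term. -/
def vars : Term → Multiset ℕ
  | var x => {x}
  | lam x t => x ::ₘ t.vars
  | app t u => t.vars + u.vars
  | esub t x u => x ::ₘ (t.vars + u.vars)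

/-- The number of explicit-substitution constructors occurring in a term. -/
def esubCount : Term → ℕ
  | var _ => 0
  | lam _ t => t.esubCount
  | app t u => t.esubCount + u.esubCount
  | esub t _ u => t.esubCount + u.esubCount + 1

/-- A term is closed if it has no free variables. -/
def Closed (t : Term) : Prop := t.fv = 0

/-- A term is well-named if each variable is bound at most once in it and
no bound variable of it occurs among its free variables. -/
def WellNamed (t : Term) : Prop :=
  t.binders.Nodup ∧ ∀ x ∈ t.binders, x ∉ t.fv

/-- de Bruijn skeletons, used to define α-equivalence. -/
inductive DB : Type
  | bvar : ℕ → DB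
  | fvar : ℕ → DB
  | lam : DB → DB
  | app : DB → DB → DB
  | esub : DB → DB → DB
  deriving DecidableEq

/-- Index of a variable in a list of binders. -/
def dbIndex (x : ℕ) : List ℕ → Option ℕ
  | [] => none
  | y :: Γ => if x = y then some 0 else (dbIndex x Γ).map (· + 1)

/-- Conversion to de Bruijn skeleton, relative to a list of enclosing binders. -/
def toDB : Term → List ℕ → DB
  | var x, Γ =>
      match dbIndex x Γ with
      | some n => DB.bvar n
      | none => DB.fvar x
  | lam x t, Γ => DB.lam (t.toDB (x :: Γ))
  | app t u, Γ => DB.app (t.toDB Γ) (u.toDB Γ)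
  | esub t x u, Γ => DB.esub (t.toDB (x :: Γ)) (u.toDB Γ)

/-- α-equivalence of terms. -/
def AlphaEq (t u : Term) : Prop := t.toDB [] = u.toDB []

/-- The (reflexive) sub-term relation. -/
inductive Subterm : Term → Term → Prop
  | refl (t) : Subterm t t
  | lam {s t} (x) : Subterm s t → Subterm s (Term.lam x t)
  | appL {s t} (u) : Subterm s t → Subterm s (Term.app t u)
  | appR (t) {s u} : Subterm s u → Subterm s (Term.app t u)
  | esubL {s t} (x) (u) : Subterm s t → Subterm s (Term.esub t x u)
  | esubR (t) (x) {s u} : Subterm s u → Subterm s (Term.esub t x u)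

/-- `s` is a sub-term of `t` up to α-equivalence. -/
def SubtermUpToAlpha (s t : Term) : Prop := ∃ s', Subterm s' t ∧ AlphaEq s s'

/-- `v'` is a copy of `v` whose bound variables are renamed to distinct
fresh variables, avoiding the variables in `avoid`. -/
def IsFreshCopy (v v' : Term) (avoid : Multiset ℕ) : Prop :=
  AlphaEq v v' ∧ v'.Pure ∧ v'.binders.Nodup ∧ ∀ x ∈ v'.binders, x ∉ avoid

end Term

/-- Evaluation contexts:
`E ::= ⟨·⟩ | E t̄ | E[x←t̄] | E'⟨x⟩[x←E]`
(`sub2 E' x E` denotes `E'⟨x⟩[x←E]`; purity of the side terms is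
imposed by the well-formedness predicate `ECtx.WF`). -/
inductive ECtx : Type
  | hole : ECtx
  | app : ECtx → Term → ECtx
  | esub : ECtx → ℕ → Term → ECtx
  | sub2 : ECtx → ℕ → ECtx → ECtx
  deriving DecidableEq

namespace ECtx

/-- Well-formedness: all side terms in an evaluation context are pure,
as required by the grammar. -/
def WF : ECtx → Prop
  | hole => True
  | app E t => E.WF ∧ t.Pure
  | esub E _ t => E.WF ∧ t.Pure
  | sub2 E' _ E => E'.WF ∧ E.WF

/-- Substitution contexts `A ::= ⟨·⟩ | A[x←t̄]`. -/
inductive IsSubst : ECtx → Prop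
  | hole : IsSubst ECtx.hole
  | esub {A : ECtx} (x : ℕ) {t : Term} :
      t.Pure → IsSubst A → IsSubst (ECtx.esub A x t)

/-- Plugging a term into the hole of an evaluation context. -/
def plug : ECtx → Term → Term
  | hole, t => t
  | app E u, t => Term.app (E.plug t) u
  | esub E x u, t => Term.esub (E.plug t) x u
  | sub2 E' x E, t => Term.esub (E'.plug (Term.var x)) x (E.plug t)

/-- Plugging an evaluation context into the hole of an evaluation context. -/
def plugC : ECtx → ECtx → ECtx
  | hole, F => F
  | app E u, F => app (E.plugC F) u
  | esub E x u, F => esub (E.plugC F) x u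
  | sub2 E' x E, F => sub2 E' x (E.plugC F)

/-- The multiset `FV_M(E)` of free variables of an evaluation context,
relative to a multiset `M` for the hole. -/
def fv : ECtx → Multiset ℕ → Multiset ℕ
  | hole, M => M
  | app E t, M => E.fv M + t.fv
  | esub E x t, M => (E.fv M).filter (· ≠ x) + t.fv
  | sub2 E' x E, M => (E'.fv {x}).filter (· ≠ x) + E.fv M

end ECtx

/-- Configurations are tagged `term` or `ctxt`. -/
inductive Tag : Type
  | term | ctxt
  deriving DecidableEq

/-- A configuration of the SAM: a (pure) term, an evaluation context, and a tag. -/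
structure Config : Type where
  t : Term
  E : ECtx
  tag : Tag
  deriving DecidableEq

/-- The six rules of the SAM. -/
inductive Rule : Type
  | r1 | r2 | r3 | r4 | r5 | r6
  deriving DecidableEq

/-- Labels of SAM transitions. -/
inductive Label : Type
  | b | s | o
  deriving DecidableEq

/-- The label of each rule: rules (1)–(3) are overhead, rule (4) is beta,
rules (5)–(6) are substitution. -/
def Rule.label : Rule → Label
  | .r1 => .o
  | .r2 => .o
  | .r3 => .o
  | .r4 => .b
  | .r5 => .s
  | .r6 => .s

/-- The labelled transition system of the call-by-need Storeless Abstract Machine. -/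
inductive Step : Config → Rule → Config → Prop
  /-- (1) (t̄ū, E)_term →_o (t̄, E⟨⟨·⟩ū⟩)_term -/
  | r1 {t u : Term} {E : ECtx} :
      t.Pure → u.Pure → E.WF →
      Step ⟨Term.app t u, E, Tag.term⟩ Rule.r1
           ⟨t, E.plugC (ECtx.app ECtx.hole u), Tag.term⟩
  /-- (2) (x, E₁⟨E₂[x←t̄]⟩)_term →_o (t̄, E₁⟨E₂⟨x⟩[x←⟨·⟩]⟩)_term -/
  | r2 {x : ℕ} {t : Term} {E₁ E₂ : ECtx} :
      t.Pure → E₁.WF → E₂.WF →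
      Step ⟨Term.var x, E₁.plugC (ECtx.esub E₂ x t), Tag.term⟩ Rule.r2
           ⟨t, E₁.plugC (ECtx.sub2 E₂ x ECtx.hole), Tag.term⟩
  /-- (3) (v̄, E)_term →_o (v̄, E)_ctxt -/
  | r3 {v : Term} {E : ECtx} :
      v.IsPureValue → E.WF →
      Step ⟨v, E, Tag.term⟩ Rule.r3 ⟨v, E, Tag.ctxt⟩
  /-- (4) (λx.t̄, E⟨A⟨·⟩ū⟩)_ctxt →_b (t̄, E⟨A⟨⟨·⟩[x←ū]⟩⟩)_term -/
  | r4 {x : ℕ} {t u : Term} {E A : ECtx} :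
      t.Pure → u.Pure → E.WF → A.IsSubst →
      Step ⟨Term.lam x t, E.plugC (ECtx.app A u), Tag.ctxt⟩ Rule.r4
           ⟨t, E.plugC (A.plugC (ECtx.esub ECtx.hole x u)), Tag.term⟩
  /-- (5) (v̄, E₁⟨E₂⟨x⟩[x←A]⟩)_ctxt →_s (v̄^≈, E₁⟨A⟨E₂[x←v̄]⟩⟩)_ctxt, if x ∈ FV_∅(E₂),
  where v̄^≈ is a fresh copy of v̄ avoiding all variables of the configuration. -/
  | r5 {x : ℕ} {v v' : Term} {E₁ E₂ A : ECtx} :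
      v.IsPureValue → E₁.WF → E₂.WF → A.IsSubst →
      x ∈ E₂.fv 0 →
      v.IsFreshCopy v' ((E₁.plugC (ECtx.sub2 E₂ x A)).plug v).vars →
      Step ⟨v, E₁.plugC (ECtx.sub2 E₂ x A), Tag.ctxt⟩ Rule.r5
           ⟨v', E₁.plugC (A.plugC (ECtx.esub E₂ x v)), Tag.ctxt⟩
  /-- (6) (v̄, E₁⟨E₂⟨x⟩[x←A]⟩)_ctxt →_s (v̄, E₁⟨A⟨E₂⟩⟩)_ctxt, if x ∉ FV_∅(E₂). -/
  | r6 {x : ℕ} {v : Term} {E₁ E₂ A : ECtx} :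
      v.IsPureValue → E₁.WF → E₂.WF → A.IsSubst →
      x ∉ E₂.fv 0 →
      Step ⟨v, E₁.plugC (ECtx.sub2 E₂ x A), Tag.ctxt⟩ Rule.r6
           ⟨v, E₁.plugC (A.plugC E₂), Tag.ctxt⟩

/-- A finite execution: a sequence of SAM transitions, recorded by its trace of rules. -/
inductive Exec : Config → List Rule → Config → Prop
  | nil (c : Config) : Exec c [] c
  | cons {c c' c'' : Config} {r : Rule} {rs : List Rule} :
      Step c r c' → Exec c' rs c'' → Exec c (r :: rs) c''

/-- `|e|_ℓ`: the number of transitions labelled `ℓ` occurring in an execution trace. -/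
def labelCount (e : List Rule) (ℓ : Label) : ℕ := (e.map Rule.label).count ℓ

/-- A term may serve as the initial term of an initial configuration:
it is pure, closed and well-named. -/
def InitialTerm (t : Term) : Prop := t.Pure ∧ t.Closed ∧ t.WellNamed

/-- A configuration is reachable if some execution from an initial configuration ends at it. -/
def Reachable (c : Config) : Prop :=
  ∃ (t₀ : Term) (e : List Rule),
    InitialTerm t₀ ∧ Exec ⟨t₀, ECtx.hole, Tag.term⟩ e c

/-- The number of maximal subsequences of consecutive transitions consisting
solely of instances of rule (1) in a trace (each such run is counted at its
last element). -/
def countR1Runs : List Rule → ℕ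
  | [] => 0
  | [r] => if r = Rule.r1 then 1 else 0
  | r :: r' :: rs =>
      (if r = Rule.r1 ∧ r' ≠ Rule.r1 then 1 else 0) + countR1Runs (r' :: rs)


/-! ### Names in pluggings -/

/-- The multiset of variables bound by an evaluation context, including those bound
in its side terms. -/
def ECtx.binders : ECtx → Multiset ℕ
  | .hole => 0
  | .app E t => E.binders + t.binders
  | .esub E x t => x ::ₘ (E.binders + t.binders)
  | .sub2 E' x E => x ::ₘ (E'.binders + E.binders)

theorem plugC_plug (E F : ECtx) (t : Term) :
    (E.plugC F).plug t = E.plug (F.plug t) := by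
  induction E <;> simp_all [ECtx.plugC, ECtx.plug]

theorem binders_plug (E : ECtx) (t : Term) :
    (E.plug t).binders = E.binders + t.binders := by
  induction E generalizing t with
  | hole => simp [ECtx.plug, ECtx.binders]
  | app E u ih => simp only [ECtx.plug, ECtx.binders, Term.binders, ih]; abel
  | esub E x u ih =>
    simp only [ECtx.plug, ECtx.binders, Term.binders, ih, Multiset.cons_add]
    congr 1; abel
  | sub2 E' x E ih' ih =>
    simp only [ECtx.plug, ECtx.binders, Term.binders, ih, ih', Multiset.cons_add, add_zero]
    congr 1; abel

theorem binders_subset_vars (t : Term) : ∀ y ∈ t.binders, y ∈ t.vars := by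
  induction t with
  | var x => simp [Term.binders]
  | lam x t ih => simp only [Term.binders, Term.vars, Multiset.mem_cons]; grind
  | app t u iht ihu => simp only [Term.binders, Term.vars, Multiset.mem_add]; grind
  | esub t x u iht ihu =>
    simp only [Term.binders, Term.vars, Multiset.mem_cons, Multiset.mem_add]; grind

theorem fv_plug (E : ECtx) (t : Term) : (E.plug t).fv = E.fv t.fv := by
  induction E generalizing t <;> simp_all [ECtx.plug, ECtx.fv, Term.fv]

/-- A free variable of a plugging comes from the context or from the plugged term. -/
theorem mem_ctx_fv (E : ECtx) (M : Multiset ℕ) :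
    ∀ y ∈ E.fv M, y ∈ E.fv 0 ∨ y ∈ M := by
  induction E generalizing M with
  | hole => simp [ECtx.fv]
  | app E u ih => simp only [ECtx.fv, Multiset.mem_add]; grind
  | esub E x u ih => simp only [ECtx.fv, Multiset.mem_add, Multiset.mem_filter]; grind
  | sub2 E' x E ih' ih => simp only [ECtx.fv, Multiset.mem_add, Multiset.mem_filter]; grind

/-- Replacing the plugged term enlarges the free variables of the plugging by at most the
variables `P` by which it enlarges those of the plugged term; the context can only capture more. -/
theorem ctx_fv_mono (E : ECtx) {M N : Multiset ℕ} {P : ℕ → Prop}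
    (h : ∀ y ∈ M, y ∈ N ∨ P y) : ∀ y ∈ E.fv M, y ∈ E.fv N ∨ P y := by
  induction E with
  | hole => simpa [ECtx.fv] using h
  | app E u ih => simp only [ECtx.fv, Multiset.mem_add]; grind
  | esub E x u ih => simp only [ECtx.fv, Multiset.mem_add, Multiset.mem_filter]; grind
  | sub2 E' x E ih' ih => simp only [ECtx.fv, Multiset.mem_add, Multiset.mem_filter]; grind

/-! ### α-equivalent terms have the same free variables -/

/-- The variable `y` occurs as a free variable of a de Bruijn skeleton. -/
def DBFree (y : ℕ) : Term.DB → Prop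
  | .bvar _ => False
  | .fvar x => y = x
  | .lam d => DBFree y d
  | .app d e => DBFree y d ∨ DBFree y e
  | .esub d e => DBFree y d ∨ DBFree y e

theorem dbIndex_eq_none (x : ℕ) (Γ : List ℕ) : Term.dbIndex x Γ = none ↔ x ∉ Γ := by
  induction Γ with
  | nil => simp [Term.dbIndex]
  | cons y Γ ih =>
    by_cases h : x = y <;> simp [Term.dbIndex, h, ih]

theorem dbFree_toDB (y : ℕ) (t : Term) (Γ : List ℕ) :
    DBFree y (t.toDB Γ) ↔ y ∈ t.fv ∧ y ∉ Γ := by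
  induction t generalizing Γ with
  | var x =>
    have hx := dbIndex_eq_none x Γ
    simp only [Term.toDB, Term.fv, Multiset.mem_singleton]
    cases h : Term.dbIndex x Γ with
    | none => simp only [DBFree]; grind
    | some n => simp only [DBFree]; grind
  | lam x t ih =>
    simp only [Term.toDB, Term.fv, DBFree, ih, Multiset.mem_filter, List.mem_cons]; grind
  | app t u iht ihu =>
    simp only [Term.toDB, Term.fv, DBFree, iht, ihu, Multiset.mem_add]; grind
  | esub t x u iht ihu =>
    simp only [Term.toDB, Term.fv, DBFree, iht, ihu, Multiset.mem_add, Multiset.mem_filter,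
      List.mem_cons]
    grind

theorem mem_fv_of_alphaEq {t u : Term} (h : t.AlphaEq u) (y : ℕ) : y ∈ t.fv ↔ y ∈ u.fv := by
  have ht := dbFree_toDB y t []
  have hu := dbFree_toDB y u []
  rw [Term.AlphaEq] at h
  rw [h] at ht
  simpa using ht.symm.trans hu

/-! ### Preservation -/

/-- A term without new free variables and without repeated binders is closed and well-named
as soon as the original term is closed: nothing free is left for a bound variable to clash with. -/
theorem closed_wellNamed_of_subset {s t : Term} (hc : t.Closed)
    (hfv : ∀ y ∈ s.fv, y ∈ t.fv) (hb : s.binders.Nodup) : s.Closed ∧ s.WellNamed := by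
  have hs : s.fv = 0 := by
    rw [Term.Closed] at hc
    apply Multiset.eq_zero_of_forall_notMem
    intro y hy
    simpa [hc] using hfv y hy
  exact ⟨hs, hb, by simp [hs]⟩

theorem plug_fv_subset (E : ECtx) {s t : Term} (h : ∀ y ∈ s.fv, y ∈ t.fv) :
    ∀ y ∈ (E.plug s).fv, y ∈ (E.plug t).fv := by
  intro y hy
  rw [fv_plug] at hy ⊢
  simpa using ctx_fv_mono E (P := fun _ => False) (by simpa using h) y hy

/-- Each single SAM transition preserves closedness and
well-namedness of the plugging: if `E⟨t̄⟩` is closed and well-named and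
`(t̄, E) → (t̄', E')`, then `E'⟨t̄'⟩` is closed and well-named. -/
theorem step_preserves_closed_wellNamed
    (t t' : Term) (E E' : ECtx) (tg tg' : Tag) (r : Rule)
    (hc : (E.plug t).Closed) (hw : (E.plug t).WellNamed)
    (hstep : Step ⟨t, E, tg⟩ r ⟨t', E', tg'⟩) :
    (E'.plug t').Closed ∧ (E'.plug t').WellNamed := by
  cases hstep with
  | r1 => simpa [plugC_plug, ECtx.plug] using And.intro hc hw
  | r2 => simpa [plugC_plug, ECtx.plug] using And.intro hc hw
  | r3 => exact ⟨hc, hw⟩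
  | @r4 x t u E A =>
    simp only [plugC_plug, ECtx.plug] at hc hw ⊢
    refine closed_wellNamed_of_subset hc (plug_fv_subset E ?_) ?_
    · intro y hy
      simp only [Term.fv, fv_plug, Multiset.mem_add] at hy ⊢
      -- Only the free variables of `u` are new inside `A`, and they occur outside `A` before.
      refine ctx_fv_mono A (P := fun y => y ∈ u.fv) ?_ y hy
      intro z hz
      simpa using hz
    · have h := hw.1
      simp only [binders_plug, Term.binders] at h ⊢
      convert h using 1
      simp only [← Multiset.singleton_add]
      abel
  | @r5 x _ _ E₁ E₂ A _ _ _ _ _ hcopy =>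
    obtain ⟨hα, -, hnd, hfresh⟩ := hcopy
    have hfresh' : ∀ y ∈ t'.binders,
        y ∉ ((E₁.plugC (ECtx.sub2 E₂ x A)).plug t).binders :=
      fun y hy hy' => hfresh y hy (binders_subset_vars _ y hy')
    simp only [plugC_plug, ECtx.plug] at hc hw hfresh' ⊢
    refine closed_wellNamed_of_subset hc (plug_fv_subset E₁ ?_) ?_
    · intro y hy
      simp only [Term.fv, fv_plug, Multiset.mem_add] at hy ⊢
      rw [or_comm]
      -- The new variables inside `A` are those of `E₂⟨x⟩` other than `x`; those of the copy
      -- are those of the value.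
      refine ctx_fv_mono A ?_ y hy
      intro z hz
      simp only [Multiset.mem_add, Multiset.mem_filter] at hz ⊢
      rcases hz with ⟨hz, hzx⟩ | hz
      · rcases ctx_fv_mono E₂ (N := {x}) (P := fun y => y ∈ t.fv)
          (fun w hw => Or.inr ((mem_fv_of_alphaEq hα w).2 hw)) z hz with h | h
        · exact Or.inr ⟨h, hzx⟩
        · exact Or.inl h
      · exact Or.inl hz
    -- The binders are the old ones together with those of the fresh copy.
    · have h := Multiset.nodup_add.2 ⟨hnd, hw.1, Multiset.disjoint_left.2 (hfresh' _)⟩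
      simp only [binders_plug, Term.binders] at h ⊢
      convert h using 1
      simp only [← Multiset.singleton_add]
      abel
  | @r6 x _ E₁ E₂ A _ _ _ _ hx =>
    simp only [plugC_plug, ECtx.plug] at hc hw ⊢
    refine closed_wellNamed_of_subset hc (plug_fv_subset E₁ ?_) ?_
    · intro y hy
      simp only [Term.fv, fv_plug, Multiset.mem_add] at hy ⊢
      rw [or_comm]
      refine ctx_fv_mono A ?_ y hy
      intro z hz
      simp only [Multiset.mem_filter]
      rcases mem_ctx_fv E₂ _ z hz with h | h
      -- Erasing `[x←·]` frees nothing, since `x` is not free in `E₂`.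
      · refine Or.inr ⟨?_, fun hzx => hx (hzx ▸ h)⟩
        simpa using ctx_fv_mono E₂ (M := 0) (N := {x}) (P := fun _ => False) (by simp) z h
      · exact Or.inl h
    · have h := hw.1
      simp only [binders_plug, Term.binders] at h ⊢
      refine Multiset.nodup_of_le ?_ h
      refine le_trans (le_of_eq ?_) (add_le_add_right (Multiset.le_cons_self _ x) _)
      abel

end SAM
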